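/- arXiv:1407.3041 — 4 statements merged into one kernel-verified Lean document; each statement's English description precedes it below -/
import Mathlib

section
/- Any digraph with n ≥ 1 vertices has at most 2n − 2 strong bridges. -/
variable {V : Type*}

/-- `p` is a path from `u` to `w` in the digraph with edge set `E`:
a nonempty list of vertices starting at `u`, ending at `w`, with consecutive edges in `E`. -/
def IsPathFrom (E : Set (V × V)) (u w : V) (p : List V) : Prop :=
  p.head? = some u ∧ p.getLast? = some w ∧ p.Chain' (fun a b => (a, b) ∈ E)

/-- There is a path from `u` to `w` in the digraph with edge set `E`. -/
def Reaches (E : Set (V × V)) (u w : V) : Prop :=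
  ∃ p, IsPathFrom E u w p

/-- Every vertex has a path to every other vertex. -/
def StronglyConnected (E : Set (V × V)) : Prop :=
  ∀ u w : V, Reaches E u w

/-- `v` and `w` are 2-edge-connected: `v = w` or, for every edge `e`,
there are paths from `v` to `w` and from `w` to `v` avoiding `e`. -/
def TwoEdgeConn (E : Set (V × V)) (v w : V) : Prop :=
  v = w ∨ ∀ e ∈ E, Reaches (E \ {e}) v w ∧ Reaches (E \ {e}) w v

/-- `w` is 2-edge-connected from `v`: for every edge `e` there is a path
from `v` to `w` avoiding `e`. -/
def TwoEdgeConnFrom (E : Set (V × V)) (v w : V) : Prop :=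
  ∀ e ∈ E, Reaches (E \ {e}) v w

/-- `u` dominates `w` in the flow graph with start vertex `s`:
every path from `s` to `w` contains `u`. -/
def Dominates (E : Set (V × V)) (s u w : V) : Prop :=
  ∀ p, IsPathFrom E s w p → u ∈ p

/-- `(u, w)` is a bridge of the flow graph with start vertex `s`:
every path from `s` to `w` contains the edge `(u, w)`. -/
def IsBridge (E : Set (V × V)) (s u w : V) : Prop :=
  (u, w) ∈ E ∧ ∀ p, IsPathFrom E s w p → (u, w) ∈ p.zip p.tail

/-- `w` is marked in the flow graph with start vertex `s`: some bridge ends at `w`. -/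
def Marked (E : Set (V × V)) (s w : V) : Prop :=
  ∃ u, IsBridge E s u w

/-- The reverse digraph: every edge direction is reversed. -/
def reverseE (E : Set (V × V)) : Set (V × V) :=
  {e | (e.2, e.1) ∈ E}

/-- `u` and `w` are mutually reachable. -/
def MutualReach (E : Set (V × V)) (u w : V) : Prop :=
  Reaches E u w ∧ Reaches E w u

/-- The number of strongly connected components: the number of equivalence
classes of the mutual-reachability relation. -/
noncomputable def numSCC (E : Set (V × V)) : ℕ :=
  Nat.card (Quot (MutualReach E))

/-- `e` is a strong bridge: removing it increases the number of strongly
connected components. -/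
def IsStrongBridge (E : Set (V × V)) (e : V × V) : Prop :=
  e ∈ E ∧ numSCC E < numSCC (E \ {e})

/-- `d` is the immediate dominator of `w` in the flow graph with start vertex `s`:
`d` is a proper dominator of `w` dominated by every proper dominator of `w`. -/
def ImmDomIs (E : Set (V × V)) (s w d : V) : Prop :=
  Dominates E s d w ∧ d ≠ w ∧ ∀ x, Dominates E s x w → x ≠ w → Dominates E s x d

/-- `r` is the deepest marked dominator `r_v` of `v`: either `r` is a marked
dominator of `v` dominated by every marked dominator of `v`, or no marked vertex
dominates `v` and `r = s`. -/
def DeepestMarkedDomIs (E : Set (V × V)) (s v r : V) : Prop :=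
  (Marked E s r ∧ Dominates E s r v ∧
    ∀ x, Marked E s x → Dominates E s x v → Dominates E s x r)
  ∨ (r = s ∧ ∀ x, Marked E s x → ¬ Dominates E s x v)

/-- `T(r)`: the vertices whose deepest marked dominator is `r`. -/
def Tset (E : Set (V × V)) (s r : V) : Set V :=
  {v | DeepestMarkedDomIs E s v r}

/-- The roots of the decomposition of the dominator tree: `s` and the marked vertices. -/
def IsRoot (E : Set (V × V)) (s r : V) : Prop :=
  r = s ∨ Marked E s r

/-- `z` is a marked child (in the dominator tree) of a boundary vertex of `T(r)`. -/
def MarkedChildOfBoundary (E : Set (V × V)) (s r z : V) : Prop :=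
  Marked E s z ∧ ∃ x ∈ Tset E s r, ImmDomIs E s z x

/-- The vertex set `V_r` of the auxiliary graph `G_r` (with `dr` playing the role
of `d(r)` when `r ≠ s`): the ordinary vertices `T(r)`, the marked children of
boundary vertices of `T(r)`, and (if `r ≠ s`) the vertex `d(r)`. -/
def auxVerts (E : Set (V × V)) (s r dr : V) : Set V :=
  Tset E s r ∪ {z | MarkedChildOfBoundary E s r z} ∪ {x | r ≠ s ∧ x = dr}

/-- The edge set `E_r` of the auxiliary graph `G_r` (with `dr` playing the role of
`d(r)` when `r ≠ s`): edges of `G` between ordinary vertices; the edge `(v, w)` for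
each boundary vertex `v ∈ T(r)` and marked child `w` of `v`; the edge `(d(r), r)` if
`r ≠ s`; and the shortcut edges of types (a), (b), (c). -/
def auxEdges (E : Set (V × V)) (s r dr : V) : Set (V × V) :=
  {e | e ∈ E ∧ e.1 ∈ Tset E s r ∧ e.2 ∈ Tset E s r} ∪
  {e | e.1 ∈ Tset E s r ∧ Marked E s e.2 ∧ ImmDomIs E s e.2 e.1} ∪
  {e | r ≠ s ∧ e = (dr, r)} ∪
  {e | ∃ u v, (u, v) ∈ E ∧ u ∈ Tset E s r ∧ ¬ Dominates E s r v ∧ e = (u, dr)} ∪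
  {e | ∃ u v z, (u, v) ∈ E ∧ v ∈ Tset E s r ∧ Dominates E s r u ∧ u ∉ Tset E s r ∧
      MarkedChildOfBoundary E s r z ∧ Dominates E s z u ∧ e = (z, v)} ∪
  {e | ∃ u v z, (u, v) ∈ E ∧ Dominates E s r u ∧ u ∉ Tset E s r ∧ ¬ Dominates E s r v ∧
      MarkedChildOfBoundary E s r z ∧ Dominates E s z u ∧ e = (z, dr)}

/-!
Fix a representative of each strongly connected component. Removing a strong bridge `(a, b)`
destroys every path from `a` to `b`; a detour through the representative `r` of their common
component shows that it also destroys every path from `a` to `r` or every path from `r` to `b`.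
In the second case the strong bridge is determined by its head `b`: a path from `r` to `b` cannot
need two different edges into `b`, because it may stop after the first one. In the first case it is
determined by its tail `a`, by the same argument in the reverse digraph. Since `b ≠ r` and `a ≠ r`
respectively, each case accounts for at most one edge per vertex that is not a representative.
-/

/-- The edge `e` is a cut edge between `u` and `w`: there are paths from `u` to `w`, and all of them
use `e`. For reachable `w` this extends the notion of a bridge `(v, w)` of the flow graph with start
vertex `u` to edges that need not end in `w`. -/
def IsCutEdge (E : Set (V × V)) (e : V × V) (u w : V) : Prop :=
  Reaches E u w ∧ ¬ Reaches (E \ {e}) u w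

section

variable {E F : Set (V × V)} {e f : V × V} {u v w : V}

theorem reaches_iff_reflTransGen :
    Reaches E u w ↔ Relation.ReflTransGen (fun a b => (a, b) ∈ E) u w := by
  constructor
  · rintro ⟨p, hhead, hlast, hchain⟩
    cases p with
    | nil => cases hhead
    | cons a p =>
      obtain rfl : a = u := Option.some.inj hhead
      rw [List.getLast?_eq_some_getLast (List.cons_ne_nil a p)] at hlast
      exact List.relationReflTransGen_of_exists_isChain_cons p hchain (Option.some.inj hlast)
  · intro h
    obtain ⟨p, hchain, hlast⟩ := List.exists_isChain_cons_of_relationReflTransGen h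
    exact ⟨u :: p, rfl, by rw [List.getLast?_eq_some_getLast (List.cons_ne_nil u p), hlast], hchain⟩

namespace Reaches

theorem refl (E : Set (V × V)) (u : V) : Reaches E u u :=
  reaches_iff_reflTransGen.2 .refl

theorem single (h : e ∈ E) : Reaches E e.1 e.2 :=
  reaches_iff_reflTransGen.2 (.single h)

theorem trans (huv : Reaches E u v) (hvw : Reaches E v w) : Reaches E u w :=
  reaches_iff_reflTransGen.2
    ((reaches_iff_reflTransGen.1 huv).trans (reaches_iff_reflTransGen.1 hvw))

theorem mono (hEF : E ⊆ F) (h : Reaches E u w) : Reaches F u w := by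
  obtain ⟨p, hhead, hlast, hchain⟩ := h
  exact ⟨p, hhead, hlast, hchain.imp fun _ _ hab => hEF hab⟩

theorem diff_singleton_or (e : V × V) (h : Reaches E u w) :
    Reaches (E \ {e}) u w ∨
      e ∈ E ∧ Reaches (E \ {e}) u e.1 ∧ Reaches (E \ {e}) e.2 w := by
  induction reaches_iff_reflTransGen.1 h with
  | refl => exact .inl (refl _ u)
  | @tail y z huy hyz ih =>
    replace ih := ih (reaches_iff_reflTransGen.2 huy)
    by_cases he : (y, z) = e
    · subst he
      have huy' : Reaches (E \ {(y, z)}) u y := ih.elim id (·.2.1)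
      exact .inr ⟨hyz, huy', refl _ z⟩
    · have hyz' : Reaches (E \ {e}) y z := single (e := (y, z)) ⟨hyz, he⟩
      exact ih.imp (·.trans hyz') fun ⟨heE, hu, hy⟩ => ⟨heE, hu, hy.trans hyz'⟩

end Reaches

theorem reaches_reverseE : Reaches (reverseE E) u w ↔ Reaches E w u := by
  rw [reaches_iff_reflTransGen, reaches_iff_reflTransGen, ← Relation.reflTransGen_swap]
  rfl

theorem reverseE_diff_singleton (E : Set (V × V)) (e : V × V) :
    reverseE (E \ {e}) = reverseE E \ {e.swap} := by
  ext ⟨a, b⟩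
  simp [reverseE, Prod.ext_iff, and_comm]

namespace IsCutEdge

theorem reverse (h : IsCutEdge E e u w) : IsCutEdge (reverseE E) e.swap w u := by
  rwa [IsCutEdge, ← reverseE_diff_singleton, reaches_reverseE, reaches_reverseE]

theorem ne (h : IsCutEdge E e u w) : u ≠ w := by
  rintro rfl
  exact h.2 (.refl _ u)

theorem mem_and_reaches_fst_and_snd_reaches (h : IsCutEdge E e u w) :
    e ∈ E ∧ Reaches (E \ {e}) u e.1 ∧ Reaches (E \ {e}) e.2 w :=
  (h.1.diff_singleton_or e).resolve_left h.2

theorem mem (h : IsCutEdge E e u w) : e ∈ E :=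
  h.mem_and_reaches_fst_and_snd_reaches.1

theorem reaches_fst (h : IsCutEdge E e u w) : Reaches (E \ {e}) u e.1 :=
  h.mem_and_reaches_fst_and_snd_reaches.2.1

theorem snd_reaches (h : IsCutEdge E e u w) : Reaches (E \ {e}) e.2 w :=
  h.mem_and_reaches_fst_and_snd_reaches.2.2

theorem fst_snd (h : IsCutEdge E e u w) : IsCutEdge E e e.1 e.2 :=
  ⟨.single h.mem, fun he => h.2 ((h.reaches_fst.trans he).trans h.snd_reaches)⟩

theorem left_or_right (h : IsCutEdge E e u w) (huv : Reaches E u v) (hvw : Reaches E v w) :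
    IsCutEdge E e u v ∨ IsCutEdge E e v w := by
  by_contra! hcut
  have huv' : Reaches (E \ {e}) u v := by_contra fun hn => hcut.1 ⟨huv, hn⟩
  have hvw' : Reaches (E \ {e}) v w := by_contra fun hn => hcut.2 ⟨hvw, hn⟩
  exact h.2 (huv'.trans hvw')

theorem eq_of_snd_eq (he : IsCutEdge E e u e.2) (hf : IsCutEdge E f u f.2) (h : e.2 = f.2) :
    e = f := by
  by_contra hne
  rcases he.reaches_fst.diff_singleton_or f with hue | ⟨hfE, huf, -⟩
  · have hue' : Reaches (E \ {f}) u e.1 := hue.mono (Set.sdiff_subset_sdiff_left Set.sdiff_subset)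
    exact hf.2 (h ▸ hue'.trans (.single ⟨he.mem, hne⟩))
  · have huf' : Reaches (E \ {e}) u f.1 := huf.mono Set.sdiff_subset
    exact he.2 (h ▸ huf'.trans (.single hfE))

end IsCutEdge

end

section

variable [Finite V]

theorem ncard_isCutEdge_to_snd_le (E : Set (V × V)) (ρ : V → V) :
    {e | IsCutEdge E e (ρ e.2) e.2}.ncard ≤ {v | ρ v ≠ v}.ncard := by
  refine Set.ncard_le_ncard_of_injOn Prod.snd (fun e he => he.ne) fun e he f hf h => ?_
  refine IsCutEdge.eq_of_snd_eq (u := ρ e.2) he ?_ h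
  rw [h]
  exact hf

theorem ncard_isCutEdge_from_fst_le (E : Set (V × V)) (ρ : V → V) :
    {e | IsCutEdge E e e.1 (ρ e.1)}.ncard ≤ {v | ρ v ≠ v}.ncard :=
  calc {e | IsCutEdge E e e.1 (ρ e.1)}.ncard
      ≤ {e | IsCutEdge (reverseE E) e (ρ e.2) e.2}.ncard :=
        Set.ncard_le_ncard_of_injOn Prod.swap (fun _ he => he.reverse) Prod.swap_injective.injOn
    _ ≤ {v | ρ v ≠ v}.ncard := ncard_isCutEdge_to_snd_le (reverseE E) ρ

end

section

variable {E : Set (V × V)} {e : V × V} {u w : V}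

theorem equivalence_mutualReach (E : Set (V × V)) : Equivalence (MutualReach E) where
  refl u := ⟨.refl E u, .refl E u⟩
  symm h := h.symm
  trans huv hvw := ⟨huv.1.trans hvw.1, hvw.2.trans huv.2⟩

/-- Mutual reachability as a setoid: its quotient, which is definitionally the one counted by
`numSCC`, is the set of strongly connected components. -/
def sccSetoid (E : Set (V × V)) : Setoid V :=
  ⟨MutualReach E, equivalence_mutualReach E⟩

/-- A representative, fixed by choice, of the strongly connected component of `v`; it depends only
on that component. -/
noncomputable def sccRep (E : Set (V × V)) (v : V) : V :=
  (Quotient.mk (sccSetoid E) v).out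

theorem mutualReach_sccRep (E : Set (V × V)) (v : V) : MutualReach E (sccRep E v) v :=
  Quotient.mk_out (s := sccSetoid E) v

theorem MutualReach.sccRep_eq (h : MutualReach E u w) : sccRep E u = sccRep E w :=
  congrArg Quotient.out (Quotient.sound (s := sccSetoid E) h)

theorem setOf_sccRep_eq_self (E : Set (V × V)) :
    {v | sccRep E v = v} = Set.range (Quotient.out : Quotient (sccSetoid E) → V) := by
  refine Set.Subset.antisymm (fun v hv => ⟨_, hv⟩) ?_
  rintro _ ⟨q, rfl⟩
  exact congrArg Quotient.out q.out_eq

theorem ncard_sccRep_ne_self_add_numSCC [Finite V] (E : Set (V × V)) :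
    {v | sccRep E v ≠ v}.ncard + numSCC E = Nat.card V := by
  have hrep : {v | sccRep E v = v}.ncard = numSCC E := by
    rw [setOf_sccRep_eq_self]
    exact Nat.card_range_of_injective Quotient.out_injective
  rw [← hrep, add_comm]
  exact Set.ncard_add_ncard_compl _

theorem numSCC_pos [Finite V] [Nonempty V] (E : Set (V × V)) : 0 < numSCC E :=
  have : Nonempty (Quot (MutualReach E)) := .map (Quot.mk _) ‹_›
  Nat.card_pos

namespace IsStrongBridge

variable [Finite V]

theorem exists_mutualReach_isCutEdge (h : IsStrongBridge E e) :
    ∃ u w, MutualReach E u w ∧ IsCutEdge E e u w := by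
  by_contra! hcut
  have hreach (u w : V) (huw : MutualReach E u w) : Reaches (E \ {e}) u w :=
    by_contra fun hn => hcut u w huw ⟨huw.1, hn⟩
  have hmutual (u w : V) (huw : MutualReach E u w) : MutualReach (E \ {e}) u w :=
    ⟨hreach u w huw, hreach w u huw.symm⟩
  have hsurj : Function.Surjective (Quot.map id hmutual) := by
    rintro ⟨v⟩
    exact ⟨Quot.mk _ v, rfl⟩
  exact h.2.not_ge (Nat.card_le_card_of_surjective _ hsurj)

theorem isCutEdge (h : IsStrongBridge E e) : IsCutEdge E e e.1 e.2 :=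
  let ⟨_, _, _, hcut⟩ := h.exists_mutualReach_isCutEdge
  hcut.fst_snd

theorem mutualReach (h : IsStrongBridge E e) : MutualReach E e.1 e.2 := by
  obtain ⟨u, w, ⟨-, hwu⟩, hcut⟩ := h.exists_mutualReach_isCutEdge
  have hsnd : Reaches E e.2 w := hcut.snd_reaches.mono Set.sdiff_subset
  have hfst : Reaches E u e.1 := hcut.reaches_fst.mono Set.sdiff_subset
  exact ⟨.single h.1, (hsnd.trans hwu).trans hfst⟩

theorem isCutEdge_sccRep (h : IsStrongBridge E e) :
    IsCutEdge E e e.1 (sccRep E e.1) ∨ IsCutEdge E e (sccRep E e.2) e.2 := by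
  have hrep : sccRep E e.1 = sccRep E e.2 := h.mutualReach.sccRep_eq
  rw [hrep]
  exact h.isCutEdge.left_or_right (hrep ▸ (mutualReach_sccRep E e.1).2) (mutualReach_sccRep E e.2).1

end IsStrongBridge

end

theorem strong_bridges_at_most_two_n_minus_two_general [Finite V] (E : Set (V × V)) :
    {e : V × V | IsStrongBridge E e}.ncard + 2 * numSCC E ≤ 2 * Nat.card V := by
  have hbridges : {e : V × V | IsStrongBridge E e}.ncard ≤ 2 * {v | sccRep E v ≠ v}.ncard :=
    calc {e : V × V | IsStrongBridge E e}.ncard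
        ≤ ({e | IsCutEdge E e e.1 (sccRep E e.1)} ∪
            {e | IsCutEdge E e (sccRep E e.2) e.2}).ncard :=
          Set.ncard_le_ncard fun _ he => he.isCutEdge_sccRep
      _ ≤ _ := Set.ncard_union_le _ _
      _ ≤ {v | sccRep E v ≠ v}.ncard + {v | sccRep E v ≠ v}.ncard :=
          add_le_add (ncard_isCutEdge_from_fst_le E (sccRep E))
            (ncard_isCutEdge_to_snd_le E (sccRep E))
      _ = 2 * {v | sccRep E v ≠ v}.ncard := (two_mul _).symm
  have hcard := ncard_sccRep_ne_self_add_numSCC E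
  omega

/-- Any digraph with `n ≥ 1` vertices has at most `2n - 2` strong bridges. -/
theorem strong_bridges_at_most_two_n_minus_two
    {V : Type*} [Fintype V] (E : Set (V × V)) (hn : 1 ≤ Nat.card V) :
    {e : V × V | IsStrongBridge E e}.ncard ≤ 2 * Nat.card V - 2 := by
  have : Nonempty V := (Nat.card_pos_iff.1 hn).1
  have hpos : 0 < numSCC E := numSCC_pos E
  have hbound := strong_bridges_at_most_two_n_minus_two_general E
  omega
end

section
/- Let G = (V, E) be a strongly connected digraph, let v ∈ V, and let w ∈ V with w ≠ v. Then w is 2-edge-connected from v if and only if no marked vertex of the flow graph G(v) dominates w in G(v). -/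
variable {V : Type*}

/-!
The whole statement is a quantification over edges of one fact: if `w` is reachable from `s`, then
deleting the edge `(a, b)` cuts `w` off from `s` exactly when `(a, b)` is a bridge of the flow graph
and `b` dominates `w`. Indeed, if `b` stays reachable without `(a, b)`, then every path from `s` can
be followed without that edge, taking the detour whenever it arrives at `b`; so cutting off `w`
forces cutting off `b`. Conversely, a path to `w` avoiding `(a, b)` would pass through the dominator
`b`, and its initial part up to `b` would contradict `(a, b)` being a bridge.
-/

theorem isChain_iff_forall_mem_zip_tail {α : Type*} {R : α → α → Prop} {l : List α} :
    l.IsChain R ↔ ∀ x ∈ l.zip l.tail, R x.1 x.2 := by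
  induction l using List.twoStepInduction with
  | nil => simp
  | singleton a => simp
  | cons_cons a b l _ ih => simp [List.isChain_cons_cons, ih b]

section Paths

variable {E : Set (V × V)} {u w x y : V} {p : List V}

namespace IsPathFrom

theorem isChain (hp : IsPathFrom E u w p) : p.IsChain (fun a b => (a, b) ∈ E) :=
  hp.2.2

theorem right_mem (hp : IsPathFrom E u w p) : w ∈ p :=
  List.mem_of_getLast? hp.2.1

theorem mono {E' : Set (V × V)} (hE : E ⊆ E') (hp : IsPathFrom E u w p) : IsPathFrom E' u w p :=
  ⟨hp.1, hp.2.1, hp.isChain.imp fun _ _ hab => hE hab⟩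

theorem concat (hp : IsPathFrom E u x p) (hxy : (x, y) ∈ E) : IsPathFrom E u y (p ++ [y]) := by
  obtain ⟨head_eq, last_eq, chain⟩ := hp
  refine ⟨by simp [head_eq], by simp, List.IsChain.append chain (.singleton y) ?_⟩
  simpa [last_eq] using hxy

theorem induction {P : V → Prop} (hp : IsPathFrom E u w p) (hu : P u)
    (step : ∀ ⦃a b⦄, (a, b) ∈ E → P a → P b) : ∀ x ∈ p, P x :=
  hp.isChain.induction P p step fun hne =>
    (List.head_of_head?_eq_some hp.1 : p.head hne = u) ▸ hu

end IsPathFrom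

theorem isPathFrom_iff_forall_mem_zip_tail :
    IsPathFrom E u w p ↔
      p.head? = some u ∧ p.getLast? = some w ∧ ∀ e ∈ p.zip p.tail, e ∈ E :=
  and_congr_right fun _ => and_congr_right fun _ => isChain_iff_forall_mem_zip_tail

theorem isPathFrom_sdiff_singleton_iff {e : V × V} :
    IsPathFrom (E \ {e}) u w p ↔ IsPathFrom E u w p ∧ e ∉ p.zip p.tail := by
  simp only [isPathFrom_iff_forall_mem_zip_tail, Set.mem_sdiff, Set.mem_singleton_iff]
  grind

theorem Reaches.refl_s4 (E : Set (V × V)) (u : V) : Reaches E u u :=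
  ⟨[u], rfl, rfl, .singleton u⟩

theorem Reaches.tail (hux : Reaches E u x) (hxy : (x, y) ∈ E) : Reaches E u y :=
  let ⟨_, hp⟩ := hux
  ⟨_, hp.concat hxy⟩

theorem IsPathFrom.reaches_of_mem (hp : IsPathFrom E u w p) (hx : x ∈ p) : Reaches E u x :=
  hp.induction (.refl E u) (fun _ _ hab hua => hua.tail hab) x hx

end Paths

section Bridges

variable {E : Set (V × V)} {s a b w : V}

theorem not_reaches_sdiff_singleton_iff {e : V × V} :
    ¬ Reaches (E \ {e}) s w ↔ ∀ p, IsPathFrom E s w p → e ∈ p.zip p.tail := by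
  simp only [Reaches, isPathFrom_sdiff_singleton_iff, not_exists, not_and, not_not]

theorem isBridge_iff_not_reaches_sdiff_singleton :
    IsBridge E s a b ↔ (a, b) ∈ E ∧ ¬ Reaches (E \ {(a, b)}) s b :=
  and_congr_right fun _ => not_reaches_sdiff_singleton_iff.symm

theorem Reaches.sdiff_singleton (hw : Reaches E s w) (hb : Reaches (E \ {(a, b)}) s b) :
    Reaches (E \ {(a, b)}) s w := by
  obtain ⟨p, hp⟩ := hw
  refine hp.induction (.refl _ s) (fun c d hcd hc => ?_) w hp.right_mem
  by_cases hdb : d = b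
  · exact hdb ▸ hb
  · exact hc.tail ⟨hcd, by simp [hdb]⟩

theorem dominates_of_not_reaches_sdiff_singleton (h : ¬ Reaches (E \ {(a, b)}) s w) :
    Dominates E s b w := fun p hp =>
  List.mem_of_mem_tail (List.of_mem_zip (not_reaches_sdiff_singleton_iff.1 h p hp)).2

theorem Dominates.reaches_of_subset {E' : Set (V × V)} (hdom : Dominates E s b w) (hE : E' ⊆ E)
    (hw : Reaches E' s w) : Reaches E' s b :=
  let ⟨p, hp⟩ := hw
  hp.reaches_of_mem (hdom p (hp.mono hE))

theorem isBridge_and_dominates_iff (hw : Reaches E s w) :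
    IsBridge E s a b ∧ Dominates E s b w ↔ (a, b) ∈ E ∧ ¬ Reaches (E \ {(a, b)}) s w := by
  rw [isBridge_iff_not_reaches_sdiff_singleton, and_assoc]
  refine and_congr_right fun _ => ⟨?_, ?_⟩
  · exact fun ⟨hb, hdom⟩ => mt (hdom.reaches_of_subset Set.sdiff_subset) hb
  · exact fun h => ⟨mt hw.sdiff_singleton h, dominates_of_not_reaches_sdiff_singleton h⟩

theorem two_edge_connected_from_iff_no_marked_dominator_general (hw : Reaches E s w) :
    TwoEdgeConnFrom E s w ↔ ¬ ∃ x, Marked E s x ∧ Dominates E s x w :=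
  calc TwoEdgeConnFrom E s w
    _ ↔ ¬ ∃ b a, (a, b) ∈ E ∧ ¬ Reaches (E \ {(a, b)}) s w := by
      simp only [TwoEdgeConnFrom, Prod.forall, not_exists, not_and, not_not]
      exact forall_comm
    _ ↔ ¬ ∃ b, Marked E s b ∧ Dominates E s b w := by
      simp only [Marked, ← isBridge_and_dominates_iff hw, exists_and_right]

end Bridges

/-- In a strongly connected digraph, `w ≠ v` is 2-edge-connected from `v` if and only
if no marked vertex of the flow graph `G(v)` dominates `w` in `G(v)`. -/
theorem two_edge_connected_from_iff_no_marked_dominator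
    {V : Type*} [Fintype V] (E : Set (V × V))
    (hsc : StronglyConnected E) (v w : V) (hvw : w ≠ v) :
    TwoEdgeConnFrom E v w ↔ ¬ ∃ x, Marked E v x ∧ Dominates E v x w :=
  two_edge_connected_from_iff_no_marked_dominator_general (hsc v w)
end

section
/- Let G = (V, E) be a digraph and s ∈ V a vertex from which every vertex is reachable. For every vertex w, the set of dominators of w in the flow graph G(s) is linearly ordered by the dominance relation: if u and x both dominate w in G(s), then u dominates x or x dominates u. Consequently, every vertex w ≠ s has a unique immediate dominator. -/
variable {V : Type*}

/-! Let `y` be the last vertex, along some path from `s` to `w`, that belongs to a set `S` of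
dominators of `w`. Replacing the part of the path up to `y` by an arbitrary path `q` from `s` to `y`
gives another path to `w`; it meets every vertex of `S`, and can do so only inside `q`. Hence every
vertex of `S` dominates `y`. Two dominators are compared by taking `S` to be that pair; the
immediate dominator is obtained from the set of proper dominators. -/

theorem exists_eq_append_cons_forall_not {P : V → Prop} {l : List V} (h : ∃ a ∈ l, P a) :
    ∃ l₁ y l₂, l = l₁ ++ y :: l₂ ∧ P y ∧ ∀ a ∈ l₂, ¬ P a := by
  induction l with
  | nil => simp at h
  | cons c t ih =>
    by_cases ht : ∃ a ∈ t, P a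
    · obtain ⟨l₁, y, l₂, rfl, hy, hl₂⟩ := ih ht
      exact ⟨c :: l₁, y, l₂, rfl, hy, hl₂⟩
    · have hc : P c := by simpa [ht] using h
      exact ⟨[], c, t, rfl, hc, fun a ha hPa => ht ⟨a, ha, hPa⟩⟩

variable {E : Set (V × V)} {s u v w x y : V}

namespace IsPathFrom

variable {p l l₁ l₂ : List V}

theorem source_mem (h : IsPathFrom E u w p) : u ∈ p :=
  List.mem_of_head? h.1

theorem target_mem (h : IsPathFrom E u w p) : w ∈ p :=
  List.mem_of_getLast? h.2.1

theorem append_singleton_of_append_cons (h : IsPathFrom E u w (l₁ ++ y :: l₂)) :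
    IsPathFrom E u y (l₁ ++ [y]) :=
  ⟨by simpa using h.1, by simp, (List.isChain_split.1 h.2.2).1⟩

theorem cons_of_append_cons (h : IsPathFrom E u w (l₁ ++ y :: l₂)) :
    IsPathFrom E y w (y :: l₂) :=
  ⟨rfl, by simpa using h.2.1, (List.isChain_split.1 h.2.2).2⟩

theorem append (hp : IsPathFrom E u v p) (hl : IsPathFrom E v w (v :: l)) :
    IsPathFrom E u w (p ++ l) := by
  obtain ⟨p', rfl⟩ := List.getLast?_eq_some_iff.1 hp.2.1
  rw [List.append_assoc, List.singleton_append]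
  exact ⟨by simpa using hp.1, by simpa using hl.2.1, List.isChain_split.2 ⟨hp.2.2, hl.2.2⟩⟩

end IsPathFrom

theorem dominates_source : Dominates E s s w :=
  fun _ hp => hp.source_mem

theorem Dominates.reaches (huw : Dominates E s u w) (hw : Reaches E s w) : Reaches E s u := by
  obtain ⟨p, hp⟩ := hw
  obtain ⟨l₁, l₂, rfl⟩ := List.append_of_mem (huw p hp)
  exact ⟨_, hp.append_singleton_of_append_cons⟩

theorem Dominates.antisymm (hu : Reaches E s u) (hux : Dominates E s u x)
    (hxu : Dominates E s x u) : u = x := by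
  obtain ⟨p, hp⟩ := hu
  obtain ⟨l₁, l₂, rfl, hul₁⟩ := List.eq_append_cons_of_mem hp.target_mem
  have path_to_u : IsPathFrom E s u (l₁ ++ [u]) := hp.append_singleton_of_append_cons
  by_contra hne
  have hx : x ∈ l₁ := by simpa [Ne.symm hne] using hxu _ path_to_u
  obtain ⟨m₁, m₂, rfl⟩ := List.append_of_mem hx
  have path_to_x : IsPathFrom E s x (m₁ ++ [x]) := by
    rw [List.append_assoc, List.cons_append] at path_to_u
    exact path_to_u.append_singleton_of_append_cons
  have hum₁ : u ∈ m₁ := by simpa [hne] using hux _ path_to_x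
  exact hul₁ (List.mem_append_left _ hum₁)

theorem exists_mem_forall_dominates {S : Set V} (hw : Reaches E s w)
    (hS : ∀ x ∈ S, Dominates E s x w) (hne : S.Nonempty) :
    ∃ y ∈ S, ∀ x ∈ S, Dominates E s x y := by
  obtain ⟨p, hp⟩ := hw
  obtain ⟨z, hz⟩ := hne
  obtain ⟨l₁, y, l₂, rfl, hy, hl₂⟩ :=
    exists_eq_append_cons_forall_not ⟨z, hS z hz p hp, hz⟩
  refine ⟨y, hy, fun x hx q hq => ?_⟩
  have hxq : x ∈ q ++ l₂ := hS x hx _ (hq.append hp.cons_of_append_cons)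
  exact (List.mem_append.1 hxq).resolve_right fun hxl₂ => hl₂ x hxl₂ hx

theorem Dominates.total (hw : Reaches E s w) (huw : Dominates E s u w)
    (hxw : Dominates E s x w) : Dominates E s u x ∨ Dominates E s x u := by
  obtain ⟨y, rfl | rfl, hy⟩ :=
    exists_mem_forall_dominates (S := {u, x}) hw (by simp [huw, hxw]) ⟨u, by simp⟩
  · exact .inr (hy x (by simp))
  · exact .inl (hy u (by simp))

theorem exists_immDomIs (hw : Reaches E s w) (hws : w ≠ s) : ∃ d, ImmDomIs E s w d := by
  obtain ⟨d, ⟨hdw, hne⟩, hd⟩ :=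
    exists_mem_forall_dominates (S := {x | Dominates E s x w ∧ x ≠ w}) hw
      (fun _ hx => hx.1) ⟨s, dominates_source, hws.symm⟩
  exact ⟨d, hdw, hne, fun x hxw hx => hd x ⟨hxw, hx⟩⟩

theorem ImmDomIs.unique {d e : V} (hw : Reaches E s w) (hd : ImmDomIs E s w d)
    (he : ImmDomIs E s w e) : d = e :=
  Dominates.antisymm (hd.1.reaches hw) (he.2.2 d hd.1 hd.2.1) (hd.2.2 e he.1 he.2.1)

theorem dominators_linearly_ordered_and_immediate_dominator_unique_general
    (hw : Reaches E s w) :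
    (∀ u x : V, Dominates E s u w → Dominates E s x w →
      Dominates E s u x ∨ Dominates E s x u) ∧
    (w ≠ s → ∃! d : V, ImmDomIs E s w d) := by
  refine ⟨fun _ _ => Dominates.total hw, fun hws => ?_⟩
  obtain ⟨d, hd⟩ := exists_immDomIs hw hws
  exact ⟨d, hd, fun _ he => he.unique hw hd⟩

/-- The dominators of any vertex are linearly ordered by the dominance relation;
consequently, every vertex other than `s` has a unique immediate dominator. -/
theorem dominators_linearly_ordered_and_immediate_dominator_unique
    {V : Type*} [Fintype V] (E : Set (V × V)) (s : V)
    (hreach : ∀ v : V, Reaches E s v) :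
    (∀ w u x : V, Dominates E s u w → Dominates E s x w →
      Dominates E s u x ∨ Dominates E s x u) ∧
    ∀ w : V, w ≠ s → ∃! d : V, ImmDomIs E s w d :=
  ⟨fun w => (dominators_linearly_ordered_and_immediate_dominator_unique_general (hreach w)).1,
    fun w => (dominators_linearly_ordered_and_immediate_dominator_unique_general (hreach w)).2⟩
end

section
/- Let G = (V, E) be a strongly connected digraph with start vertex s, and let e = (u, v) ∈ E be an edge with r_u ≠ r_v. Then either e is a bridge of G(s) and u is the immediate dominator d(v) of v, or u is a proper descendant of r_v in the dominator tree, i.e., r_v dominates u in G(s) and r_v ≠ u. -/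
variable {V : Type*}

/-!
If `r_v` does not dominate `u`, then `r_v ≠ s`, and since a proper dominator of `v` dominates
every predecessor of `v`, also `r_v = v`. So `v` is marked, and as some path from `s` to `u`
avoids `v`, the bridge into `v` can only be `(u, v)`. If instead `r_v` dominates `u`, then
`r_v = u` is impossible, because a marked vertex (or `s`) is its own deepest marked dominator.
-/

theorem getLast?_eq_some_of_mem_zip_tail_concat {p : List V} {w v : V} (hv : v ∉ p)
    (h : (w, v) ∈ (p ++ [v]).zip (p ++ [v]).tail) : p.getLast? = some w := by
  obtain ⟨i, hi, hwv⟩ := List.mem_iff_getElem.1 h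
  simp only [List.getElem_zip, List.getElem_tail, Prod.mk.injEq] at hwv
  obtain ⟨hw, hv'⟩ := hwv
  have hlen : i + 1 = p.length := by
    by_contra hlen
    have hip : i + 1 < p.length := by grind
    rw [List.getElem_append_left hip] at hv'
    exact hv (hv' ▸ List.getElem_mem hip)
  rw [List.getElem_append_left (by lia)] at hw
  rw [List.getLast?_eq_getElem?, ← hlen, Nat.add_sub_cancel, ← hw]
  exact List.getElem?_eq_getElem (by lia)

section

variable {E : Set (V × V)} {s u v w x : V}

theorem IsPathFrom.concat_s10 {p : List V} (hp : IsPathFrom E s u p) (he : (u, v) ∈ E) :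
    IsPathFrom E s v (p ++ [v]) := by
  obtain ⟨hhead, hlast, hchain⟩ := hp
  refine ⟨by simp [List.head?_append, hhead], by simp, ?_⟩
  exact hchain.append (List.isChain_singleton _) (by simp [hlast, he])

theorem IsPathFrom.of_append_cons {l r : List V} (hp : IsPathFrom E s w (l ++ x :: r)) :
    IsPathFrom E s x (l ++ [x]) := by
  obtain ⟨hhead, -, hchain⟩ := hp
  rw [List.append_cons] at hhead hchain
  exact ⟨by simpa [List.head?_append] using hhead, by simp, hchain.left_of_append⟩

theorem IsPathFrom.start_mem {p : List V} (hp : IsPathFrom E s w p) : s ∈ p :=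
  List.mem_of_head? hp.1

theorem IsPathFrom.end_mem {p : List V} (hp : IsPathFrom E s w p) : w ∈ p :=
  List.mem_of_getLast? hp.2.1

theorem Reaches.exists_isPathFrom_notMem (h : Reaches E s w) :
    ∃ l, IsPathFrom E s w (l ++ [w]) ∧ w ∉ l := by
  obtain ⟨p, hp⟩ := h
  obtain ⟨l, r, rfl, hl⟩ := List.eq_append_cons_of_mem hp.end_mem
  exact ⟨l, hp.of_append_cons, hl⟩

theorem Dominates.refl (E : Set (V × V)) (s w : V) : Dominates E s w w :=
  fun _ hp => hp.end_mem

theorem Dominates.start (E : Set (V × V)) (s w : V) : Dominates E s s w :=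
  fun _ hp => hp.start_mem

theorem Dominates.antisymm_s10 (hr : Reaches E s w) (hxw : Dominates E s x w)
    (hwx : Dominates E s w x) : x = w := by
  obtain ⟨l, hl, hwl⟩ := hr.exists_isPathFrom_notMem
  by_contra hne
  have hxl : x ∈ l := by simpa [hne] using hxw _ hl
  obtain ⟨l₁, l₂, rfl⟩ := List.append_of_mem hxl
  rw [List.append_assoc, List.cons_append] at hl
  have hw : w ∈ l₁ ++ [x] := hwx _ hl.of_append_cons
  rw [List.append_cons] at hwl
  exact hwl (List.mem_append_left l₂ hw)

theorem Dominates.of_edge (hx : Dominates E s x v) (hne : x ≠ v) (he : (u, v) ∈ E) :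
    Dominates E s x u := by
  intro p hp
  simpa [hne] using hx _ (hp.concat_s10 he)

theorem IsBridge.dominates (h : IsBridge E s u v) : Dominates E s u v :=
  fun p hp => (List.of_mem_zip (h.2 p hp)).1

theorem IsBridge.immDomIs (h : IsBridge E s u v) (hne : u ≠ v) : ImmDomIs E s v u :=
  ⟨h.dominates, hne, fun _ hx hxv => hx.of_edge hxv h.1⟩

theorem IsBridge.eq_of_edge_of_not_dominates (h : IsBridge E s w v) (he : (u, v) ∈ E)
    (hvu : ¬ Dominates E s v u) : w = u := by
  obtain ⟨p, hp, hvp⟩ : ∃ p, IsPathFrom E s u p ∧ v ∉ p := by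
    simpa [Dominates] using hvu
  have hlast : p.getLast? = some w :=
    getLast?_eq_some_of_mem_zip_tail_concat hvp (h.2 _ (hp.concat_s10 he))
  exact Option.some.inj (hlast.symm.trans hp.2.1)

theorem Marked.isBridge_of_edge_of_not_dominates (hv : Marked E s v) (he : (u, v) ∈ E)
    (hvu : ¬ Dominates E s v u) : IsBridge E s u v := by
  obtain ⟨w, hw⟩ := hv
  exact hw.eq_of_edge_of_not_dominates he hvu ▸ hw

namespace DeepestMarkedDomIs

variable {r : V}

theorem isRoot (h : DeepestMarkedDomIs E s v r) : IsRoot E s r :=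
  h.elim (fun hr => .inr hr.1) (fun hr => .inl hr.1)

theorem dominates (h : DeepestMarkedDomIs E s v r) : Dominates E s r v := by
  rcases h with ⟨-, hr, -⟩ | ⟨rfl, -⟩
  · exact hr
  · exact .start E r v

theorem dominates_of_isRoot (h : DeepestMarkedDomIs E s v r) (hx : IsRoot E s x)
    (hxv : Dominates E s x v) : Dominates E s x r := by
  rcases hx with rfl | hx
  · exact .start E x r
  · rcases h with ⟨-, -, hr⟩ | ⟨-, hnone⟩
    · exact hr x hx hxv
    · exact absurd hxv (hnone x hx)

theorem eq_of_isRoot (h : DeepestMarkedDomIs E s v r) (hv : IsRoot E s v)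
    (hreach : Reaches E s v) : r = v :=
  h.dominates.antisymm_s10 hreach (h.dominates_of_isRoot hv (.refl E s v))

end DeepestMarkedDomIs

theorem edge_between_different_subtrees_general {ru rv : V} (hreach : Reaches E s u)
    (he : (u, v) ∈ E) (hru : DeepestMarkedDomIs E s u ru) (hrv : DeepestMarkedDomIs E s v rv)
    (hne : ru ≠ rv) :
    (IsBridge E s u v ∧ ImmDomIs E s v u) ∨ (Dominates E s rv u ∧ rv ≠ u) := by
  by_cases hdom : Dominates E s rv u
  · right
    refine ⟨hdom, ?_⟩
    rintro rfl
    exact hne (hru.eq_of_isRoot hrv.isRoot hreach)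
  · left
    have hstart : rv ≠ s := fun h => hdom (h ▸ .start E s u)
    obtain rfl : rv = v := by
      by_contra hrvv
      exact hdom (hrv.dominates.of_edge hrvv he)
    have hmarked : Marked E s rv := hrv.isRoot.resolve_left hstart
    have huv : u ≠ rv := fun h => hdom (h ▸ .refl E s u)
    have hbridge : IsBridge E s u rv := hmarked.isBridge_of_edge_of_not_dominates he hdom
    exact ⟨hbridge, hbridge.immDomIs huv⟩

end

/-- Let `e = (u, v)` be an edge with `r_u ≠ r_v`. Then either `e` is a bridge of
`G(s)` and `u` is the immediate dominator of `v`, or `u` is a proper descendant of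
`r_v` in the dominator tree (`r_v` dominates `u` and `r_v ≠ u`). -/
theorem edge_between_different_subtrees
    {V : Type*} [Fintype V] (E : Set (V × V)) (s : V)
    (hsc : StronglyConnected E) (u v ru rv : V) (he : (u, v) ∈ E)
    (hru : DeepestMarkedDomIs E s u ru) (hrv : DeepestMarkedDomIs E s v rv)
    (hne : ru ≠ rv) :
    (IsBridge E s u v ∧ ImmDomIs E s v u) ∨ (Dominates E s rv u ∧ rv ≠ u) := by
  exact edge_between_different_subtrees_general (hsc s u) he hru hrv hne
end
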